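/- Let K be a field, let n ≥ 2, and let I be the ideal of the polynomial ring K[X_0, X_1, …, X_n] generated by the polynomials F_{i,j} = X_{i-1}·X_{j+1} − X_i·X_j for all 1 ≤ i ≤ j ≤ n−1. Then the quotient algebra K[X_0, X_1, …, X_n]/I is isomorphic, as a K-algebra, to the subalgebra K[x^n, x^{n−1}y, …, x y^{n−1}, y^n] of the polynomial ring K[x,y], via the map induced by X_i ↦ x^{n−i} y^i for 0 ≤ i ≤ n. -/

import Mathlib

open MvPolynomial

namespace VeroneseAux

section ring
variable {A : Type*} [CommRing A] (n : ℕ) (x : ℕ → A)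

/-- The normal form of a product of `d` generators with index sum `w`. -/
def nf (d w : ℕ) : A :=
  if d = 0 then 1 else
    x 0 ^ (d - 1 - min (w / n) (d - 1)) * x (w - n * min (w / n) (d - 1))
      * x n ^ (min (w / n) (d - 1))

theorem nf_eq (hn : 2 ≤ n) (a b r : ℕ) (hr : r ≤ n) :
    nf n x (a + b + 1) (r + n * b) = x 0 ^ a * x r * x n ^ b := by
  have h0 : a + b + 1 ≠ 0 := by omega
  rw [nf, if_neg h0]
  rcases Nat.lt_or_ge r n with h | h
  · have h1 : (r + n * b) / n = b := by
      rw [Nat.add_mul_div_left _ _ (by omega), Nat.div_eq_of_lt h]; omega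
    have h2 : min b (a + b + 1 - 1) = b := by omega
    rw [h1, h2]
    congr 3 <;> omega
  · obtain rfl : r = n := by omega
    have h1 : (r + r * b) / r = b + 1 := by
      rw [Nat.add_mul_div_left _ _ (by omega), Nat.div_self (by omega)]; omega
    rw [h1]
    rcases a with _ | a
    · have h2 : min (b + 1) (0 + b + 1 - 1) = b := by omega
      rw [h2]
      congr 3 <;> omega
    · have h2 : min (b + 1) (a + 1 + b + 1 - 1) = b + 1 := by omega
      have h3 : r + r * b - r * (b + 1) = 0 := by rw [mul_add]; omega
      have h4 : a + 1 + b + 1 - 1 - (b + 1) = a := by omega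
      rw [h2, h3, h4]
      ring

theorem low
    (hx : ∀ a b, a + 1 ≤ b → b + 1 ≤ n → x a * x (b + 1) = x (a + 1) * x b)
    (a : ℕ) : ∀ b, a ≤ b → a + b ≤ n → x a * x b = x 0 * x (a + b) := by
  induction a with
  | zero => intro b _ _; simp
  | succ a ih =>
    intro b h1 h2
    rw [← hx a b h1 (by omega), ih (b + 1) (by omega) (by omega)]
    congr 2; omega

theorem high
    (hx : ∀ a b, a + 1 ≤ b → b + 1 ≤ n → x a * x (b + 1) = x (a + 1) * x b)
    (a : ℕ) : ∀ b, a ≤ b → b ≤ n → n ≤ a + b → x a * x b = x n * x (a + b - n) := by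
  induction a with
  | zero =>
    intro b _ _ _
    obtain rfl : b = n := by omega
    simp [mul_comm]
  | succ a ih =>
    intro b h1 h2 h3
    rcases Nat.lt_or_ge b n with h | h
    · rw [← hx a b h1 (by omega), ih (b + 1) (by omega) (by omega) (by omega)]
      congr 2; omega
    · obtain rfl : b = n := by omega
      rw [mul_comm]; congr 2; omega

theorem low'
    (hx : ∀ a b, a + 1 ≤ b → b + 1 ≤ n → x a * x (b + 1) = x (a + 1) * x b)
    (a b : ℕ) (h : a + b ≤ n) : x a * x b = x 0 * x (a + b) := by
  rcases le_total a b with h1 | h1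
  · exact low n x hx a b h1 h
  · rw [mul_comm, add_comm, low n x hx b a h1 (by omega)]

theorem high'
    (hx : ∀ a b, a + 1 ≤ b → b + 1 ≤ n → x a * x (b + 1) = x (a + 1) * x b)
    (a b : ℕ) (ha : a ≤ n) (hb : b ≤ n) (h : n ≤ a + b) :
    x a * x b = x n * x (a + b - n) := by
  rcases le_total a b with h1 | h1
  · exact high n x hx a b h1 hb h
  · rw [mul_comm, add_comm, high n x hx b a h1 ha (by omega)]

theorem prod_form
    (hx : ∀ a b, a + 1 ≤ b → b + 1 ≤ n → x a * x (b + 1) = x (a + 1) * x b)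
    (m : Multiset (Fin (n + 1))) :
    m = 0 ∨ ∃ a b r, r ≤ n ∧ m.card = a + b + 1 ∧ (m.map (fun i : Fin (n + 1) => (i : ℕ))).sum = r + n * b ∧
      (m.map (fun i : Fin (n + 1) => x (i : ℕ))).prod = x 0 ^ a * x r * x n ^ b := by
  induction m using Multiset.induction_on with
  | empty => left; rfl
  | cons i m ih =>
    right
    have hi : (i : ℕ) ≤ n := by omega
    rcases ih with rfl | ⟨a, b, r, hr, hc, hs, hp⟩
    · exact ⟨0, 0, i, hi, by simp, by simp, by simp⟩
    · rcases le_total (i + r : ℕ) n with h | h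
      · refine ⟨a + 1, b, i + r, h, by simp [hc]; omega, by simp [hs]; omega, ?_⟩
        have := low' n x hx i r h
        simp only [Multiset.map_cons, Multiset.prod_cons, hp]
        linear_combination (x 0 ^ a * x n ^ b) * this
      · refine ⟨a, b + 1, i + r - n, by omega, by simp [hc]; omega, ?_, ?_⟩
        · simp only [Multiset.map_cons, Multiset.sum_cons, hs, mul_add]; omega
        · have := high' n x hx i r hi hr h
          simp only [Multiset.map_cons, Multiset.prod_cons, hp]
          linear_combination (x 0 ^ a * x n ^ b) * this

theorem prod_eq_nf
    (hx : ∀ a b, a + 1 ≤ b → b + 1 ≤ n → x a * x (b + 1) = x (a + 1) * x b)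
    (hn : 2 ≤ n) (m : Multiset (Fin (n + 1))) :
    (m.map (fun i : Fin (n + 1) => x (i : ℕ))).prod = nf n x m.card (m.map (fun i : Fin (n + 1) => (i : ℕ))).sum := by
  rcases prod_form n x hx m with rfl | ⟨a, b, r, hr, hc, hs, hp⟩
  · simp [nf]
  · rw [hp, hc, hs, nf_eq n x hn a b r hr]

end ring

theorem image_form {B : Type*} [CommRing B] (n : ℕ) (u v : B) (m : Multiset (Fin (n + 1))) :
    ∃ c, c + (m.map (fun i : Fin (n + 1) => (i : ℕ))).sum = n * m.card ∧
      (m.map (fun i : Fin (n + 1) => u ^ (n - (i : ℕ)) * v ^ (i : ℕ))).prod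
        = u ^ c * v ^ (m.map (fun i : Fin (n + 1) => (i : ℕ))).sum := by
  induction m using Multiset.induction_on with
  | empty => exact ⟨0, by simp, by simp⟩
  | cons i m ih =>
    obtain ⟨c, h1, h2⟩ := ih
    have hi : (i : ℕ) ≤ n := by omega
    refine ⟨c + (n - i), ?_, ?_⟩
    · simp only [Multiset.map_cons, Multiset.sum_cons, Multiset.card_cons, mul_add]; omega
    · simp only [Multiset.map_cons, Multiset.sum_cons, Multiset.prod_cons, h2, pow_add]; ring

/-- The parametrization of the rational normal curve. -/
noncomputable def phi (K : Type*) [Field K] (n : ℕ) :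
    MvPolynomial (Fin (n + 1)) K →ₐ[K] MvPolynomial (Fin 2) K :=
  aeval (fun i => X 0 ^ (n - (i : ℕ)) * X 1 ^ (i : ℕ))

theorem ker_le (K : Type*) [Field K] (n : ℕ) (hn : 2 ≤ n) {A : Type*} [CommRing A] [Algebra K A]
    (f : MvPolynomial (Fin (n + 1)) K →ₐ[K] A) (x : ℕ → A)
    (hf : ∀ i : Fin (n + 1), f (X i) = x i)
    (hx : ∀ a b, a + 1 ≤ b → b + 1 ≤ n → x a * x (b + 1) = x (a + 1) * x b)
    (p : MvPolynomial (Fin (n + 1)) K) (hp : phi K n p = 0) : f p = 0 := by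
  let psi : MvPolynomial (Fin 2) K →ₗ[K] A :=
    (basisMonomials (Fin 2) K).constr K (fun s => nf n x ((s 0 + s 1) / n) (s 1))
  have hpsi : ∀ s : Fin 2 →₀ ℕ, psi (monomial s 1) = nf n x ((s 0 + s 1) / n) (s 1) := by
    intro s
    have := (basisMonomials (Fin 2) K).constr_basis K
      (fun s => nf n x ((s 0 + s 1) / n) (s 1)) s
    simpa [psi] using this
  have key : psi ∘ₗ (phi K n).toLinearMap = f.toLinearMap := by
    refine (basisMonomials (Fin (n + 1)) K).ext fun s => ?_
    have hs : (monomial s (1 : K)) = ((Finsupp.toMultiset s).map X).prod := by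
      rw [Finsupp.toMultiset_map, Finsupp.prod_toMultiset, monomial_eq, C_1, one_mul,
        Finsupp.prod_mapDomain_index (by simp) (by simp [pow_add])]
    simp only [coe_basisMonomials, LinearMap.comp_apply, AlgHom.toLinearMap_apply]
    rw [hs]
    generalize Finsupp.toMultiset s = m
    rw [map_multiset_prod (phi K n), map_multiset_prod f, Multiset.map_map, Multiset.map_map]
    obtain ⟨c, h1, h2⟩ := image_form n (X 0 : MvPolynomial (Fin 2) K) (X 1) m
    have e1 : (m.map ((phi K n) ∘ X)).prod = monomial
        (Finsupp.single 0 c + Finsupp.single 1 (m.map (fun i : Fin (n + 1) => (i : ℕ))).sum) (1 : K) := by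
      have : ((phi K n) ∘ X) = fun i : Fin (n + 1) =>
          (X 0 ^ (n - (i : ℕ)) * X 1 ^ (i : ℕ) : MvPolynomial (Fin 2) K) := by
        funext i; simp [phi]
      rw [this, h2, X_pow_eq_monomial, X_pow_eq_monomial, monomial_mul, one_mul]
    have e2 : (f ∘ X) = fun i : Fin (n + 1) => x (i : ℕ) := by funext i; simp [hf]
    rw [e1, e2, prod_eq_nf n x hx hn, hpsi]
    simp [h1, Nat.mul_div_cancel_left _ (show 0 < n by omega)]
  have := LinearMap.congr_fun key p
  simp only [LinearMap.comp_apply, AlgHom.toLinearMap_apply, hp, map_zero] at this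
  exact this.symm

end VeroneseAux

/-- `K[X₀,…,Xₙ]/I ≅ K[xⁿ, xⁿ⁻¹y, …, xyⁿ⁻¹, yⁿ]` via `Xᵢ ↦ xⁿ⁻ⁱyⁱ`,
where `I` is generated by the `F_{i,j} = X_{i-1} X_{j+1} - X_i X_j`, `1 ≤ i ≤ j ≤ n-1`. -/
theorem veronese_quotient_iso (K : Type*) [Field K] (n : ℕ) (hn : 2 ≤ n)
    (I : Ideal (MvPolynomial (Fin (n + 1)) K))
    (hI : I = Ideal.span {f : MvPolynomial (Fin (n + 1)) K |
      ∃ (i j : ℕ) (_ : 1 ≤ i) (_ : i ≤ j) (_ : j ≤ n - 1),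
        f = X (⟨i - 1, by omega⟩ : Fin (n + 1)) * X ⟨j + 1, by omega⟩
          - X ⟨i, by omega⟩ * X ⟨j, by omega⟩}) :
    ∃ e : (MvPolynomial (Fin (n + 1)) K ⧸ I) ≃ₐ[K]
        (Algebra.adjoin K {m : MvPolynomial (Fin 2) K | ∃ i ≤ n, m = X 0 ^ (n - i) * X 1 ^ i}),
      ∀ i : Fin (n + 1),
        (e (Ideal.Quotient.mk I (X i)) : MvPolynomial (Fin 2) K)
          = X 0 ^ (n - (i : ℕ)) * X 1 ^ (i : ℕ) := by
  have hker : RingHom.ker (VeroneseAux.phi K n) = I := by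
    apply le_antisymm
    · intro p hp
      rw [← Ideal.Quotient.eq_zero_iff_mem]
      refine VeroneseAux.ker_le K n hn (Ideal.Quotient.mkₐ K I)
        (fun i => if h : i < n + 1 then Ideal.Quotient.mk I (X ⟨i, h⟩) else 0) ?_ ?_ p hp
      · intro i; simp only [i.isLt, dif_pos]; rfl
      · intro a b h1 h2
        simp only [show a < n + 1 by omega, show b < n + 1 by omega, show a + 1 < n + 1 by omega,
          show b + 1 < n + 1 by omega, dif_pos]
        rw [← map_mul, ← map_mul, Ideal.Quotient.eq, hI]
        exact Ideal.subset_span ⟨a + 1, b, by omega, h1, by omega, rfl⟩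
    · rw [hI, Ideal.span_le]
      rintro _ ⟨i, j, h1, h2, h3, rfl⟩
      simp only [SetLike.mem_coe, RingHom.mem_ker, VeroneseAux.phi, map_sub, map_mul, aeval_X]
      obtain ⟨i, rfl⟩ : ∃ k, i = k + 1 := ⟨i - 1, by omega⟩
      obtain ⟨k, rfl⟩ : ∃ k, n = j + 1 + k := ⟨n - j - 1, by omega⟩
      have e1 : j + 1 + k - i = (j + 1 + k - (i + 1)) + 1 := by omega
      have e2 : j + 1 + k - (j + 1) = k := by omega
      have e3 : j + 1 + k - j = k + 1 := by omega
      simp only [Nat.add_sub_cancel, e1, e2, e3]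
      ring
  have hrange : (VeroneseAux.phi K n).range =
      Algebra.adjoin K {m : MvPolynomial (Fin 2) K | ∃ i ≤ n, m = X 0 ^ (n - i) * X 1 ^ i} := by
    rw [VeroneseAux.phi, ← Algebra.adjoin_range_eq_range_aeval]
    congr 1
    ext m
    constructor
    · rintro ⟨i, rfl⟩
      exact ⟨i, by omega, rfl⟩
    · rintro ⟨i, hi, rfl⟩
      exact ⟨⟨i, by omega⟩, rfl⟩
  refine ⟨((Ideal.quotientEquivAlgOfEq K hker.symm).trans
    (Ideal.quotientKerEquivRange (VeroneseAux.phi K n))).trans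
    (Subalgebra.equivOfEq _ _ hrange), fun i => ?_⟩
  change VeroneseAux.phi K n (X i) = _
  simp [VeroneseAux.phi]
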